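/- E(Λ_q) is finitely generated as a module over its subalgebra Z_gr(E(Λ_q)) if and only if ζ = q_0 q_1 ⋯ q_{m−1} is a root of unity. -/

import Mathlib

open scoped BigOperators

noncomputable section

/-- Generators of the path algebra: trivial paths `e i`, arrows `a i : i → i+1`
and `abar i : i+1 → i`. -/
inductive Gen (m : ℕ) : Type
  | e : ZMod m → Gen m
  | a : ZMod m → Gen m
  | abar : ZMod m → Gen m

/-- The free associative algebra on the generators. -/
abbrev FA (K : Type) [Field K] (m : ℕ) : Type := FreeAlgebra K (Gen m)

def Ee (K : Type) [Field K] (m : ℕ) (i : ZMod m) : FA K m := FreeAlgebra.ι K (Gen.e i)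
def Aa (K : Type) [Field K] (m : ℕ) (i : ZMod m) : FA K m := FreeAlgebra.ι K (Gen.a i)
def Bb (K : Type) [Field K] (m : ℕ) (i : ZMod m) : FA K m := FreeAlgebra.ι K (Gen.abar i)

/-- The defining relations of the path algebra KQ. -/
inductive PathRel (K : Type) [Field K] (m : ℕ) [NeZero m] : FA K m → FA K m → Prop
  | orth : ∀ i j : ZMod m, i ≠ j → PathRel K m (Ee K m i * Ee K m j) 0
  | idem : ∀ i : ZMod m, PathRel K m (Ee K m i * Ee K m i) (Ee K m i)
  | total : PathRel K m (∑ i : ZMod m, Ee K m i) 1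
  | asrc : ∀ i : ZMod m, PathRel K m (Ee K m i * Aa K m i) (Aa K m i)
  | atgt : ∀ i : ZMod m, PathRel K m (Aa K m i * Ee K m (i + 1)) (Aa K m i)
  | bsrc : ∀ i : ZMod m, PathRel K m (Ee K m (i + 1) * Bb K m i) (Bb K m i)
  | btgt : ∀ i : ZMod m, PathRel K m (Bb K m i * Ee K m i) (Bb K m i)

/-- The path algebra KQ. -/
abbrev PathAlg (K : Type) [Field K] (m : ℕ) [NeZero m] : Type := RingQuot (PathRel K m)

def pe (K : Type) [Field K] (m : ℕ) [NeZero m] (i : ZMod m) : PathAlg K m :=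
  RingQuot.mkAlgHom K (PathRel K m) (Ee K m i)
def pa (K : Type) [Field K] (m : ℕ) [NeZero m] (i : ZMod m) : PathAlg K m :=
  RingQuot.mkAlgHom K (PathRel K m) (Aa K m i)
def pb (K : Type) [Field K] (m : ℕ) [NeZero m] (i : ZMod m) : PathAlg K m :=
  RingQuot.mkAlgHom K (PathRel K m) (Bb K m i)

/-- The relations defining the Koszul dual (Ext algebra) of `Λ_q`:
`q_i⁻¹ a_i ā_i + ā_{i-1} a_{i-1} = 0`. -/
inductive ExtRel (K : Type) [Field K] (m : ℕ) [NeZero m] (q : ZMod m → K) :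
    PathAlg K m → PathAlg K m → Prop
  | rel : ∀ i : ZMod m,
      ExtRel K m q ((q i)⁻¹ • (pa K m i * pb K m i) + pb K m (i - 1) * pa K m (i - 1)) 0

/-- The Ext algebra `E(Λ_q)`. -/
abbrev ExtAlg (K : Type) [Field K] (m : ℕ) [NeZero m] (q : ZMod m → K) : Type :=
  RingQuot (ExtRel K m q)

def xe (K : Type) [Field K] (m : ℕ) [NeZero m] (q : ZMod m → K) (i : ZMod m) :
    ExtAlg K m q := RingQuot.mkAlgHom K (ExtRel K m q) (pe K m i)
def xa (K : Type) [Field K] (m : ℕ) [NeZero m] (q : ZMod m → K) (i : ZMod m) :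
    ExtAlg K m q := RingQuot.mkAlgHom K (ExtRel K m q) (pa K m i)
def xb (K : Type) [Field K] (m : ℕ) [NeZero m] (q : ZMod m → K) (i : ZMod m) :
    ExtAlg K m q := RingQuot.mkAlgHom K (ExtRel K m q) (pb K m i)

/-- `γ_i^n`, the image of the path `a_i a_{i+1} ⋯ a_{i+n-1}` in `E(Λ_q)`. -/
def gam (K : Type) [Field K] (m : ℕ) [NeZero m] (q : ZMod m → K) (i : ZMod m) :
    ℕ → ExtAlg K m q
  | 0 => xe K m q i
  | n + 1 => xa K m q i * gam K m q (i + 1) n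

/-- `δ_i^n`, the image of the path `ā_{i+n-1} ⋯ ā_{i+1} ā_i` in `E(Λ_q)`. -/
def del (K : Type) [Field K] (m : ℕ) [NeZero m] (q : ZMod m → K) (i : ZMod m) :
    ℕ → ExtAlg K m q
  | 0 => xe K m q i
  | n + 1 => xb K m q (i + (n : ZMod m)) * del K m q i n

/-- Homogeneity of path-length degree `n` in `E(Λ_q)`: membership in the span of
the (images of) paths of length `n`, i.e. of the monomials `γ_i^s δ_j^t` with `s + t = n`. -/
def Homog (K : Type) [Field K] (m : ℕ) [NeZero m] (q : ZMod m → K) (n : ℕ)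
    (z : ExtAlg K m q) : Prop :=
  z ∈ Submodule.span K
    {x : ExtAlg K m q | ∃ (i j : ZMod m) (s t : ℕ), s + t = n ∧ x = gam K m q i s * del K m q j t}

/-- The graded centre of `E(Λ_q)`: the subalgebra generated by all homogeneous elements `z`
of degree `n` such that `z g = (-1)^{n n'} g z` for all homogeneous `g` of degree `n'`. -/
def ZGr (K : Type) [Field K] (m : ℕ) [NeZero m] (q : ZMod m → K) :
    Subalgebra K (ExtAlg K m q) :=
  Algebra.adjoin K
    {z : ExtAlg K m q | ∃ n : ℕ, Homog K m q n z ∧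
      ∀ (n' : ℕ) (g : ExtAlg K m q), Homog K m q n' g →
        z * g = ((-1 : K) ^ (n * n')) • (g * z)}

/-- The product `q_k q_{k+1} ⋯ q_{k+len-1}` (subscripts modulo `m`). -/
def qblock (K : Type) [Field K] (m : ℕ) [NeZero m] (q : ZMod m → K) (k len : ℕ) : K :=
  ∏ j ∈ Finset.range len, q ((k + j : ℕ) : ZMod m)

/-- The coefficient `∏_{k=1}^{i} (q_k ⋯ q_{k+len-1})⁻¹`. -/
def wcoef (K : Type) [Field K] (m : ℕ) [NeZero m] (q : ZMod m → K) (i len : ℕ) : K :=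
  ∏ k ∈ Finset.Icc 1 i, (qblock K m q k len)⁻¹

/-!
Put `x = ∑ aᵢ`, `y = ∑ āᵢ` and `fᵢ = -qᵢ⁻¹`, and let `d ∈ K^m` stand for `∑ dᵢ eᵢ`.  Then
`E(Λ_q)` is an iterated skew polynomial ring over `K^m`: `x d = d(· + 1) x`, `y d = d(· - 1) y`,
`y x = f x y`, and every element is uniquely a finite sum `∑ d_{s,t} x^s y^t`.  Uniqueness holds
because the same rules define an action on the space of coefficient families `(d_{s,t})`.

Moving `x^s` past `y` multiplies by products of `s` cyclically consecutive `fᵢ`.  If `ζ` is a root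
of unity, so is `ξ = ∏ fᵢ = ± ζ⁻¹`, and a suitable even `N` makes `x^N` and `y^N` central; the
monomials `eᵢ x^s y^t` with `s, t < N` then generate.  Conversely, comparing coefficients in
`z x = ± x z` and `z y = ± y z` and going once around the cycle gives `d_{s,t} = ± ξ^t d_{s,t}` and
`d_{s,t} = ± ξ^s d_{s,t}`.  If `ζ` is not a root of unity, only `d_{0,0}` survives, so the graded
centre is finite-dimensional, whereas `E(Λ_q)` is not.
-/

section FiniteOverSubalgebra

variable {R A : Type*} [CommSemiring R] [Semiring A] [Algebra R A]

theorem subalgebra_finite_iff_exists_fin (S : Subalgebra R A) :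
    Module.Finite S A ↔ ∃ (n : ℕ) (g : Fin n → A), ∀ x : A, ∃ c : Fin n → A,
      (∀ i, c i ∈ S) ∧ x = ∑ i, c i * g i := by
  rw [Module.finite_def, Submodule.fg_iff_exists_fin_generating_family]
  refine exists₂_congr fun n g => ?_
  simp only [Submodule.eq_top_iff', Submodule.mem_span_range_iff_exists_fun]
  refine forall_congr' fun x => ⟨fun ⟨c, hc⟩ => ?_, fun ⟨c, hcS, hc⟩ => ?_⟩
  · exact ⟨fun i => c i, fun i => (c i).2, hc.symm⟩
  · exact ⟨fun i => ⟨c i, hcS i⟩, hc.symm⟩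

theorem mul_pow_mul_pow_eq_central_mul {x y : A} {N : ℕ} (hx : x ^ N ∈ Subalgebra.center R A)
    (hy : y ^ N ∈ Subalgebra.center R A) (a : A) (s t : ℕ) :
    a * (x ^ s * y ^ t) =
      (x ^ N) ^ (s / N) * (y ^ N) ^ (t / N) * (a * (x ^ (s % N) * y ^ (t % N))) := by
  have hxc (w : A) : Commute ((x ^ N) ^ (s / N)) w :=
    (Subalgebra.mem_center_iff.1 (pow_mem hx _) w).symm
  have hyc (w : A) : Commute ((y ^ N) ^ (t / N)) w :=
    (Subalgebra.mem_center_iff.1 (pow_mem hy _) w).symm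
  conv_lhs => rw [← Nat.div_add_mod s N, ← Nat.div_add_mod t N, pow_add, pow_add, pow_mul, pow_mul]
  rw [mul_assoc ((x ^ N) ^ (s / N)), ← (hxc a).left_comm, ← (hyc (x ^ (s % N))).left_comm,
    ← (hyc a).left_comm, ← mul_assoc ((x ^ N) ^ (s / N))]

theorem subalgebra_finite_of_central_pow {ι : Type*} [Finite ι] {S : Subalgebra R A} {e : ι → A}
    {x y : A} {N : ℕ} (hN : 0 < N) (hxS : x ^ N ∈ S) (hyS : y ^ N ∈ S)
    (hx : x ^ N ∈ Subalgebra.center R A) (hy : y ^ N ∈ Subalgebra.center R A)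
    (hspan : Submodule.span R (Set.range fun p : ι × ℕ × ℕ =>
      e p.1 * (x ^ p.2.1 * y ^ p.2.2)) = ⊤) :
    Module.Finite S A := by
  let g : ι × Fin N × Fin N → A := fun p => e p.1 * (x ^ (p.2.1 : ℕ) * y ^ (p.2.2 : ℕ))
  suffices htop : Submodule.span S (Set.range g) = ⊤ from
    ⟨htop ▸ Submodule.fg_span (Set.finite_range g)⟩
  rw [← Submodule.restrictScalars_eq_top_iff R, eq_top_iff, ← hspan, Submodule.span_le]
  rintro _ ⟨⟨i, s, t⟩, rfl⟩
  let c : S := ⟨(x ^ N) ^ (s / N) * (y ^ N) ^ (t / N), mul_mem (pow_mem hxS _) (pow_mem hyS _)⟩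
  have hmem : c • g (i, ⟨s % N, Nat.mod_lt _ hN⟩, ⟨t % N, Nat.mod_lt _ hN⟩) ∈
      Submodule.span S (Set.range g) :=
    Submodule.smul_mem _ _ (Submodule.subset_span ⟨_, rfl⟩)
  rwa [show c • g _ = _ from (mul_pow_mul_pow_eq_central_mul hx hy (e i) s t).symm] at hmem

theorem finite_of_finite_over_le {S T : Subalgebra R A} (hST : S ≤ T) [IsNoetherian R T]
    [Module.Finite S A] : Module.Finite R A := by
  have : Module.Finite R S := Module.Finite.of_injective (Subalgebra.inclusion hST).toLinearMap
    (Subalgebra.inclusion_injective hST)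
  exact Module.Finite.trans S A

end FiniteOverSubalgebra

section OrthogonalIdempotents

theorem map_single_mul_of_semiconj {R A ι : Type*} [CommSemiring R] [Semiring A] [Algebra R A]
    [DecidableEq ι] (φ : (ι → R) →ₐ[R] A) (σ : Equiv.Perm ι)
    {x : A} (hx : ∀ d, x * φ d = φ (d ∘ σ) * x) (i : ι) :
    φ (Pi.single i 1) * x = x * φ (Pi.single (σ i) 1) := by
  rw [hx]
  congr 2
  ext j
  simp [Pi.single_apply]

section Semiring

variable {A ι : Type*} [Semiring A] [Fintype ι] {e : ι → A}

theorem eq_of_forall_idem_mul_eq (he : CompleteOrthogonalIdempotents e) {u v : A}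
    (h : ∀ i, e i * u = e i * v) : u = v := by
  rw [← one_mul u, ← one_mul v, ← he.complete, Finset.sum_mul, Finset.sum_mul]
  exact Finset.sum_congr rfl fun i _ => h i

theorem idem_mul_sum (he : OrthogonalIdempotents e) (σ : Equiv.Perm ι) {a : ι → A}
    (ha : ∀ j, e (σ j) * a j = a j) (i : ι) : e (σ i) * ∑ j, a j = a i := by
  rw [Finset.mul_sum, Finset.sum_eq_single_of_mem i (Finset.mem_univ i), ha]
  intro j _ hji
  rw [← ha j, ← mul_assoc, he.ortho (σ.injective.ne hji.symm), zero_mul]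

theorem sum_mul_idem (he : OrthogonalIdempotents e) (σ : Equiv.Perm ι) {a : ι → A}
    (ha : ∀ j, a j * e (σ j) = a j) (i : ι) : (∑ j, a j) * e (σ i) = a i := by
  rw [Finset.sum_mul, Finset.sum_eq_single_of_mem i (Finset.mem_univ i), ha]
  intro j _ hji
  rw [← ha j, mul_assoc, he.ortho (σ.injective.ne hji), mul_zero]

end Semiring

variable (R : Type*) {A ι : Type*} [CommSemiring R] [Semiring A] [Algebra R A] [Fintype ι]

/-- The homomorphism `d ↦ ∑ i, d i • e i` attached to a complete family `e` of orthogonal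
idempotents; it lets tuples of scalars act on `A` as diagonal matrices. -/
def diagonalAlgHom {e : ι → A} (he : CompleteOrthogonalIdempotents e) : (ι → R) →ₐ[R] A :=
  AlgHom.ofLinearMap (Fintype.linearCombination R e)
    (by simp [Fintype.linearCombination_apply, he.complete])
    (fun c d => by
      classical
      simp [Fintype.linearCombination_apply, Finset.sum_mul_sum, he.mul_eq, smul_smul, mul_comm])

variable {R}

theorem diagonalAlgHom_apply {e : ι → A} (he : CompleteOrthogonalIdempotents e) (d : ι → R) :
    diagonalAlgHom R he d = ∑ i, d i • e i := rfl

theorem idem_mul_diagonalAlgHom {e : ι → A} (he : CompleteOrthogonalIdempotents e) (i : ι)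
    (d : ι → R) : e i * diagonalAlgHom R he d = d i • e i := by
  classical
  simp [diagonalAlgHom_apply, Finset.mul_sum, he.mul_eq]

theorem diagonalAlgHom_single [DecidableEq ι] {e : ι → A} (he : CompleteOrthogonalIdempotents e)
    (i : ι) : diagonalAlgHom R he (Pi.single i 1) = e i := by
  simp [diagonalAlgHom_apply, Pi.single_apply, ite_smul]

theorem mul_diagonalAlgHom_of_semiconj {e : ι → A} (he : CompleteOrthogonalIdempotents e)
    (σ : Equiv.Perm ι) {x : A} (hx : ∀ i, e i * x = x * e (σ i)) (d : ι → R) :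
    x * diagonalAlgHom R he d = diagonalAlgHom R he (d ∘ σ) * x := by
  simp only [diagonalAlgHom_apply, Finset.mul_sum, Finset.sum_mul, smul_mul_assoc, mul_smul_comm,
    hx, Function.comp_apply]
  exact (Equiv.sum_comp σ fun i => d i • (x * e i)).symm

end OrthogonalIdempotents

theorem apply_of_single_eq_single {R M N α β : Type*} [Semiring R] [AddCommMonoid M]
    [AddCommMonoid N] [Module R M] [Module R N] {T : (α →₀ M) →ₗ[R] (β →₀ N)} {σ : α → β}
    (hσ : Function.Injective σ) {τ : α → M → N}
    (hT : ∀ p d, T (Finsupp.single p d) = Finsupp.single (σ p) (τ p d)) (w : α →₀ M) (p : α) :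
    T w (σ p) = τ p (w p) := by
  have hτ_zero : τ p 0 = 0 := by simpa using (hT p 0).symm
  have hτ_add (c d : M) : τ p (c + d) = τ p c + τ p d :=
    Finsupp.single_injective (σ p) <| by
      rw [← hT, Finsupp.single_add, map_add, hT, hT, Finsupp.single_add]
  induction w using Finsupp.induction_linear with
  | zero => simp [hτ_zero]
  | add u v hu hv => simp [hτ_add, hu, hv]
  | single p' d =>
    obtain rfl | hp := eq_or_ne p' p
    · simp [hT]
    · simp [hT, hσ.ne hp, hp, hτ_zero]

section CyclicProducts

variable {m : ℕ} {M : Type*} [CommMonoid M]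

/-- The product `f i * f (i + r) * ⋯ * f (i + (n - 1) r)` along an arithmetic progression of
residues. -/
def stepProd (r : ZMod m) (f : ZMod m → M) (n : ℕ) (i : ZMod m) : M :=
  ∏ k ∈ Finset.range n, f (i + k * r)

@[simp]
theorem stepProd_zero (r : ZMod m) (f : ZMod m → M) : stepProd r f 0 = 1 :=
  funext fun _ => by simp [stepProd]

theorem stepProd_succ (r : ZMod m) (f : ZMod m → M) (n : ℕ) (i : ZMod m) :
    stepProd r f (n + 1) i = stepProd r f n i * f (i + n * r) :=
  Finset.prod_range_succ _ _

theorem stepProd_succ' (r : ZMod m) (f : ZMod m → M) (n : ℕ) (i : ZMod m) :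
    stepProd r f (n + 1) i = f i * stepProd r f n (i + r) := by
  simp [stepProd, Finset.prod_range_succ', mul_comm (f i), add_mul, add_assoc, add_comm r]

variable [NeZero m]

theorem prod_range_natCast_zmod (g : ZMod m → M) :
    ∏ k ∈ Finset.range m, g k = ∏ j, g j :=
  Finset.prod_bij' (fun k _ => (k : ZMod m)) (fun j _ => j.val) (fun _ _ => Finset.mem_univ _)
    (fun j _ => Finset.mem_range.2 j.val_lt)
    (fun _ hk => ZMod.val_cast_of_lt (Finset.mem_range.1 hk))
    (fun j _ => ZMod.natCast_zmod_val j) (fun _ _ => rfl)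

theorem stepProd_card (r : (ZMod m)ˣ) (f : ZMod m → M) (i : ZMod m) :
    stepProd r f m i = ∏ j, f j := by
  rw [stepProd, prod_range_natCast_zmod fun j => f (i + j * (r : ZMod m))]
  exact Equiv.prod_comp (r.mulRight.trans (Equiv.addLeft i)) f

theorem stepProd_card_mul (r : (ZMod m)ˣ) (f : ZMod m → M) (k : ℕ) (i : ZMod m) :
    stepProd r f (m * k) i = (∏ j, f j) ^ k := by
  induction k with
  | zero => simp
  | succ k ih =>
    rw [pow_succ, ← ih, ← stepProd_card r f i, mul_add_one, stepProd, Finset.prod_range_add]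
    simp [stepProd]

theorem prod_stepProd (r : ZMod m) (f : ZMod m → M) (n : ℕ) :
    ∏ i, stepProd r f n i = (∏ j, f j) ^ n := by
  have translate (k : ℕ) : ∏ i, f (i + k * r) = ∏ j, f j :=
    Equiv.prod_comp (Equiv.addRight (k * r)) f
  simp only [stepProd]
  rw [Finset.prod_comm]
  simp only [translate, Finset.prod_const, Finset.card_range]

theorem prod_const_mul_stepProd_translate (c : M) (r : ZMod m) (f : ZMod m → M) (n : ℕ)
    (j₀ : ZMod m) : ∏ j, c * stepProd r f n (j + j₀) = c ^ m * (∏ j, f j) ^ n := by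
  rw [Finset.prod_mul_distrib, Finset.prod_const, Finset.card_univ, ZMod.card, ← prod_stepProd r]
  exact congrArg _ (Equiv.prod_comp (Equiv.addRight j₀) (stepProd r f n))

theorem eq_prod_mul_of_cyclic_recurrence {c κ : ZMod m → M} (h : ∀ i, c (i + 1) = κ i * c i)
    (i : ZMod m) : c i = (∏ j, κ j) * c i := by
  have iterate (n : ℕ) : c (i + n) = stepProd 1 κ n i * c i := by
    induction n with
    | zero => simp
    | succ n ih =>
      rw [stepProd_succ, Nat.cast_succ, ← add_assoc, h, ih, mul_one, mul_left_comm, mul_assoc]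
  have once_around := iterate m
  rwa [CharP.cast_eq_zero, add_zero, ← Units.val_one, stepProd_card] at once_around

end CyclicProducts

theorem isOfFinOrder_prod_neg_inv_iff {ι K : Type*} [Fintype ι] [Field K] (q : ι → K) :
    IsOfFinOrder (∏ i, -(q i)⁻¹) ↔ IsOfFinOrder (∏ i, q i) := by
  have hsq : (∏ i, -(q i)⁻¹) ^ 2 = ((∏ i, q i) ^ 2)⁻¹ := by
    simp only [← Finset.prod_pow, neg_sq, inv_pow, Finset.prod_inv_distrib]
  have hinv (a : K) : IsOfFinOrder a⁻¹ ↔ IsOfFinOrder a := by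
    simp only [isOfFinOrder_iff_pow_eq_one, inv_pow, inv_eq_one]
  have hpow (a : K) : IsOfFinOrder (a ^ 2) ↔ IsOfFinOrder a := by simp [isOfFinOrder_pow]
  rw [← hpow, hsq, hinv, hpow]

theorem isOfFinOrder_of_eq_mul_pow_mul {K : Type*} [Field K] {c ε ξ : K} {k n : ℕ} (hn : n ≠ 0)
    (hε : ε * ε = 1) (hc : c ≠ 0) (h : c = ε ^ k * ξ ^ n * c) : IsOfFinOrder ξ := by
  have hone : ε ^ k * ξ ^ n = 1 := mul_right_cancel₀ hc (by rw [one_mul, ← h])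
  have hεk : (ε ^ k) ^ 2 = 1 := by rw [pow_right_comm, sq, hε, one_pow]
  refine isOfFinOrder_iff_pow_eq_one.2 ⟨n * 2, by positivity, ?_⟩
  calc ξ ^ (n * 2) = (ε ^ k) ^ 2 * (ξ ^ n) ^ 2 := by rw [hεk, one_mul, pow_mul]
    _ = 1 := by rw [← mul_pow, hone, one_pow]

namespace ExtAlg

variable {K : Type} [Field K] {m : ℕ} (q : ZMod m → K)

section Generators

variable [NeZero m]

/-- The composite `K⟨e, a, ā⟩ → KQ → E(Λ_q)`. -/
def mkFA : FA K m →ₐ[K] ExtAlg K m q :=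
  (RingQuot.mkAlgHom K (ExtRel K m q)).comp (RingQuot.mkAlgHom K (PathRel K m))

theorem mkFA_surjective : Function.Surjective (mkFA q) :=
  (RingQuot.mkAlgHom_surjective K _).comp (RingQuot.mkAlgHom_surjective K _)

variable {q} in
theorem mkFA_eq_of_pathRel {u v : FA K m} (h : PathRel K m u v) : mkFA q u = mkFA q v :=
  congrArg (RingQuot.mkAlgHom K (ExtRel K m q)) (RingQuot.mkAlgHom_rel K h)

@[simp]
theorem mkFA_Ee (i : ZMod m) : mkFA q (Ee K m i) = xe K m q i := rfl

@[simp]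
theorem mkFA_Aa (i : ZMod m) : mkFA q (Aa K m i) = xa K m q i := rfl

@[simp]
theorem mkFA_Bb (i : ZMod m) : mkFA q (Bb K m i) = xb K m q i := rfl

theorem completeOrthogonalIdempotents_xe : CompleteOrthogonalIdempotents (xe K m q) where
  idem i := by simpa [IsIdempotentElem] using mkFA_eq_of_pathRel (q := q) (PathRel.idem i)
  ortho i j hij := by simpa using mkFA_eq_of_pathRel (q := q) (PathRel.orth i j hij)
  complete := by simpa using mkFA_eq_of_pathRel (q := q) PathRel.total

theorem xe_mul_xa (i : ZMod m) : xe K m q i * xa K m q i = xa K m q i := by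
  simpa using mkFA_eq_of_pathRel (q := q) (PathRel.asrc i)

theorem xa_mul_xe (i : ZMod m) : xa K m q i * xe K m q (i + 1) = xa K m q i := by
  simpa using mkFA_eq_of_pathRel (q := q) (PathRel.atgt i)

theorem xe_mul_xb (i : ZMod m) : xe K m q (i + 1) * xb K m q i = xb K m q i := by
  simpa using mkFA_eq_of_pathRel (q := q) (PathRel.bsrc i)

theorem xb_mul_xe (i : ZMod m) : xb K m q i * xe K m q i = xb K m q i := by
  simpa using mkFA_eq_of_pathRel (q := q) (PathRel.btgt i)

/-- The scalars `fᵢ = -qᵢ⁻¹` with `ā_{i-1} a_{i-1} = fᵢ aᵢ āᵢ` in `E(Λ_q)`. -/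
def twist (i : ZMod m) : K := -(q i)⁻¹

theorem xb_mul_xa (i : ZMod m) :
    xb K m q (i - 1) * xa K m q (i - 1) = twist q i • (xa K m q i * xb K m q i) := by
  have hrel : (q i)⁻¹ • (xa K m q i * xb K m q i) + xb K m q (i - 1) * xa K m q (i - 1) = 0 := by
    simpa [xa, xb] using RingQuot.mkAlgHom_rel K (ExtRel.rel (K := K) (q := q) i)
  exact (eq_neg_of_add_eq_zero_right hrel).trans (neg_smul _ _).symm

/-- The sum `x` of the arrows `aᵢ`. -/
def X : ExtAlg K m q := ∑ i, xa K m q i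

/-- The sum `y` of the arrows `āᵢ`. -/
def Y : ExtAlg K m q := ∑ i, xb K m q i

theorem xe_mul_X (i : ZMod m) : xe K m q i * X q = xa K m q i :=
  idem_mul_sum (completeOrthogonalIdempotents_xe q).toOrthogonalIdempotents (Equiv.refl _)
    (xe_mul_xa q) i

theorem X_mul_xe (i : ZMod m) : X q * xe K m q (i + 1) = xa K m q i :=
  sum_mul_idem (completeOrthogonalIdempotents_xe q).toOrthogonalIdempotents (Equiv.addRight 1)
    (xa_mul_xe q) i

theorem xe_mul_Y (i : ZMod m) : xe K m q (i + 1) * Y q = xb K m q i :=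
  idem_mul_sum (completeOrthogonalIdempotents_xe q).toOrthogonalIdempotents (Equiv.addRight 1)
    (xe_mul_xb q) i

theorem Y_mul_xe (i : ZMod m) : Y q * xe K m q i = xb K m q i :=
  sum_mul_idem (completeOrthogonalIdempotents_xe q).toOrthogonalIdempotents (Equiv.refl _)
    (xb_mul_xe q) i

/-- The copy `d ↦ ∑ dᵢ eᵢ` of `K^m` in `E(Λ_q)`. -/
def diag : (ZMod m → K) →ₐ[K] ExtAlg K m q :=
  diagonalAlgHom K (completeOrthogonalIdempotents_xe q)

@[simp]
theorem diag_single (i : ZMod m) : diag q (Pi.single i 1) = xe K m q i :=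
  diagonalAlgHom_single _ i

theorem X_mul_diag (d : ZMod m → K) : X q * diag q d = diag q (fun i => d (i + 1)) * X q :=
  mul_diagonalAlgHom_of_semiconj _ (Equiv.addRight 1)
    (fun i => (xe_mul_X q i).trans (X_mul_xe q i).symm) d

theorem Y_mul_diag (d : ZMod m → K) : Y q * diag q d = diag q (fun i => d (i - 1)) * Y q :=
  mul_diagonalAlgHom_of_semiconj _ (Equiv.subRight 1)
    (fun i => by simpa using (xe_mul_Y q (i - 1)).trans (Y_mul_xe q (i - 1)).symm) d

theorem Y_mul_X : Y q * X q = diag q (twist q) * (X q * Y q) := by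
  have he := completeOrthogonalIdempotents_xe q
  refine eq_of_forall_idem_mul_eq he fun i => ?_
  calc xe K m q i * (Y q * X q)
      = xb K m q (i - 1) * X q := by rw [← mul_assoc, ← xe_mul_Y, sub_add_cancel]
    _ = xb K m q (i - 1) * xa K m q (i - 1) := by rw [← xe_mul_X, ← mul_assoc, xb_mul_xe]
    _ = twist q i • (xa K m q i * xb K m q i) := xb_mul_xa q i
    _ = twist q i • (xa K m q i * Y q) := by rw [← xe_mul_Y, ← mul_assoc, xa_mul_xe]
    _ = xe K m q i * (diag q (twist q) * (X q * Y q)) := by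
      rw [diag, ← mul_assoc, idem_mul_diagonalAlgHom, smul_mul_assoc, ← mul_assoc, xe_mul_X]

theorem X_pow_mul_diag (s : ℕ) (d : ZMod m → K) :
    X q ^ s * diag q d = diag q (fun i => d (i + s)) * X q ^ s := by
  induction s generalizing d with
  | zero => simp
  | succ s ih =>
    rw [pow_succ, mul_assoc, X_mul_diag, ← mul_assoc, ih, mul_assoc]
    simp only [Nat.cast_succ, add_assoc]

theorem Y_pow_mul_diag (t : ℕ) (d : ZMod m → K) :
    Y q ^ t * diag q d = diag q (fun i => d (i - t)) * Y q ^ t := by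
  induction t generalizing d with
  | zero => simp
  | succ t ih =>
    rw [pow_succ, mul_assoc, Y_mul_diag, ← mul_assoc, ih, mul_assoc]
    simp only [Nat.cast_succ, sub_sub]

theorem xe_mul_X_pow (i : ZMod m) (s : ℕ) :
    xe K m q i * X q ^ s = X q ^ s * xe K m q (i + s) := by
  simpa using map_single_mul_of_semiconj (diag q) (Equiv.addRight (s : ZMod m))
    (X_pow_mul_diag q s) i

theorem xe_mul_Y_pow (i : ZMod m) (t : ℕ) :
    xe K m q (i + t) * Y q ^ t = Y q ^ t * xe K m q i := by
  simpa using map_single_mul_of_semiconj (diag q) (Equiv.subRight (t : ZMod m))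
    (Y_pow_mul_diag q t) (i + t)

theorem Y_mul_X_pow (s : ℕ) :
    Y q * X q ^ s = diag q (stepProd 1 (twist q) s) * (X q ^ s * Y q) := by
  induction s with
  | zero => simp
  | succ s ih =>
    have hprod : stepProd 1 (twist q) (s + 1) =
        stepProd 1 (twist q) s * fun i => twist q (i + s) := by
      ext i
      simp [stepProd_succ]
    calc Y q * X q ^ (s + 1)
        = diag q (stepProd 1 (twist q) s) * (X q ^ s * (Y q * X q)) := by
          rw [pow_succ, ← mul_assoc, ih, mul_assoc, mul_assoc]
      _ = diag q (stepProd 1 (twist q) s) *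
            (diag q (fun i => twist q (i + s)) * (X q ^ s * (X q * Y q))) := by
          rw [Y_mul_X, ← mul_assoc (X q ^ s), X_pow_mul_diag, mul_assoc]
      _ = diag q (stepProd 1 (twist q) (s + 1)) * (X q ^ (s + 1) * Y q) := by
          rw [hprod, map_mul, pow_succ]
          simp only [mul_assoc]

theorem Y_pow_mul_X (t : ℕ) :
    Y q ^ t * X q = diag q (stepProd (-1) (twist q) t) * (X q * Y q ^ t) := by
  induction t with
  | zero => simp
  | succ t ih =>
    have hprod : stepProd (-1) (twist q) (t + 1) =
        (fun i => stepProd (-1) (twist q) t (i - 1)) * twist q := by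
      ext i
      simp [stepProd_succ', mul_comm (twist q i), sub_eq_add_neg]
    calc Y q ^ (t + 1) * X q
        = Y q * diag q (stepProd (-1) (twist q) t) * (X q * Y q ^ t) := by
          rw [pow_succ', mul_assoc, ih, mul_assoc]
      _ = diag q (fun i => stepProd (-1) (twist q) t (i - 1)) * (Y q * X q * Y q ^ t) := by
          rw [Y_mul_diag]
          simp only [mul_assoc]
      _ = diag q (stepProd (-1) (twist q) (t + 1)) * (X q * Y q ^ (t + 1)) := by
          rw [Y_mul_X, hprod, map_mul, pow_succ']
          simp only [mul_assoc]

theorem adjoin_diag_X_Y :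
    Algebra.adjoin K (Set.range (diag q) ∪ {X q, Y q}) = ⊤ := by
  set S := Algebra.adjoin K (Set.range (diag q) ∪ {X q, Y q})
  have hdiag (d : ZMod m → K) : diag q d ∈ S := Algebra.subset_adjoin (by simp)
  have hxe (i : ZMod m) : xe K m q i ∈ S := diag_single q i ▸ hdiag _
  have hX : X q ∈ S := Algebra.subset_adjoin (by simp)
  have hY : Y q ∈ S := Algebra.subset_adjoin (by simp)
  rw [eq_top_iff, ← (AlgHom.range_eq_top (mkFA q)).2 (mkFA_surjective q), ← Algebra.map_top,
    ← FreeAlgebra.adjoin_range_ι, AlgHom.map_adjoin, Algebra.adjoin_le_iff]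
  rintro _ ⟨_, ⟨g, rfl⟩, rfl⟩
  match g with
  | .e i => exact hxe i
  | .a i => exact show xa K m q i ∈ S from xe_mul_X q i ▸ mul_mem (hxe i) hX
  | .abar i => exact show xb K m q i ∈ S from Y_mul_xe q i ▸ mul_mem hY (hxe i)

end Generators

section Lift

variable {A : Type*} [Ring A] [Algebra K A]

/-- The data of a homomorphism `E(Λ_q) → A`: images of `K^m`, `x` and `y` that satisfy the same
commutation rules. -/
structure LiftData (A : Type*) [Ring A] [Algebra K A] where
  φ : (ZMod m → K) →ₐ[K] A
  x : A
  y : A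
  x_mul_φ : ∀ d, x * φ d = φ (fun i => d (i + 1)) * x
  y_mul_φ : ∀ d, y * φ d = φ (fun i => d (i - 1)) * y
  y_mul_x : y * x = φ (twist q) * (x * y)

namespace LiftData

variable {q} (D : LiftData q A)

/-- The image of `eᵢ`. -/
def idem (i : ZMod m) : A := D.φ (Pi.single i 1)

theorem idem_mul_x (i : ZMod m) : D.idem i * D.x = D.x * D.idem (i + 1) :=
  map_single_mul_of_semiconj D.φ (Equiv.addRight 1) D.x_mul_φ i

theorem idem_mul_y (i : ZMod m) : D.idem (i + 1) * D.y = D.y * D.idem i := by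
  simpa [idem] using map_single_mul_of_semiconj D.φ (Equiv.subRight 1) D.y_mul_φ (i + 1)

theorem idem_mul_φ (i : ZMod m) (d : ZMod m → K) : D.idem i * D.φ d = d i • D.idem i := by
  rw [idem, ← map_mul, ← map_smul]
  congr 1
  ext j
  obtain rfl | hj := eq_or_ne j i <;> simp [*]

variable [NeZero m]

theorem completeOrthogonalIdempotents_idem : CompleteOrthogonalIdempotents D.idem :=
  (CompleteOrthogonalIdempotents.single fun _ : ZMod m => K).map D.φ.toRingHom

theorem idem_mul_idem (i : ZMod m) : D.idem i * D.idem i = D.idem i :=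
  D.completeOrthogonalIdempotents_idem.idem i

/-- The images of the generators of the free algebra. -/
def gen : Gen m → A
  | .e i => D.idem i
  | .a i => D.idem i * D.x
  | .abar i => D.y * D.idem i

theorem lift_gen_eq_of_pathRel ⦃u v : FA K m⦄ (h : PathRel K m u v) :
    FreeAlgebra.lift K D.gen u = FreeAlgebra.lift K D.gen v := by
  have he := D.completeOrthogonalIdempotents_idem
  cases h with
  | orth i j hij => simpa [Ee, gen] using he.ortho hij
  | idem i => simpa [Ee, gen] using D.idem_mul_idem i
  | total => simpa [Ee, gen] using he.complete
  | asrc i => simp [Ee, Aa, gen, ← mul_assoc, idem_mul_idem]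
  | atgt i => simp [Ee, Aa, gen, idem_mul_x, mul_assoc, idem_mul_idem]
  | bsrc i =>
    simpa [Ee, Bb, gen, ← mul_assoc, idem_mul_y] using by rw [mul_assoc, idem_mul_idem]
  | btgt i => simp [Ee, Bb, gen, mul_assoc, idem_mul_idem]

/-- The homomorphism `KQ → A` with the given values on generators. -/
def pathLift : PathAlg K m →ₐ[K] A :=
  RingQuot.liftAlgHom K ⟨FreeAlgebra.lift K D.gen, D.lift_gen_eq_of_pathRel⟩

theorem pathLift_pe (i : ZMod m) : D.pathLift (pe K m i) = D.idem i := by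
  simp [pathLift, pe, Ee, gen]

theorem pathLift_pa (i : ZMod m) : D.pathLift (pa K m i) = D.idem i * D.x := by
  simp [pathLift, pa, Aa, gen]

theorem pathLift_pb (i : ZMod m) : D.pathLift (pb K m i) = D.y * D.idem i := by
  simp [pathLift, pb, Bb, gen]

theorem pathLift_eq_of_extRel ⦃u v : PathAlg K m⦄ (h : ExtRel K m q u v) :
    D.pathLift u = D.pathLift v := by
  obtain ⟨i⟩ := h
  have hab : D.idem i * D.x * (D.y * D.idem i) = D.idem i * (D.x * D.y) := by
    rw [← idem_mul_y, ← mul_assoc, mul_assoc (D.idem i), ← idem_mul_x, ← mul_assoc,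
      idem_mul_idem, mul_assoc]
  have hba : D.y * D.idem (i - 1) * (D.idem (i - 1) * D.x) = twist q i • (D.idem i * (D.x * D.y)) :=
    calc D.y * D.idem (i - 1) * (D.idem (i - 1) * D.x)
        = D.y * D.idem (i - 1) * D.x := by rw [← mul_assoc, mul_assoc D.y, idem_mul_idem]
      _ = D.idem i * (D.y * D.x) := by rw [← idem_mul_y, sub_add_cancel, mul_assoc]
      _ = twist q i • (D.idem i * (D.x * D.y)) := by
        rw [y_mul_x, ← mul_assoc, idem_mul_φ, smul_mul_assoc]
  rw [map_add, map_smul, map_mul, map_mul, pathLift_pa, pathLift_pb, pathLift_pa, pathLift_pb,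
    hab, hba, ← add_smul, twist, add_neg_cancel, zero_smul, map_zero]

/-- The universal property of `E(Λ_q)` in terms of `K^m`, `x` and `y`. -/
def lift : ExtAlg K m q →ₐ[K] A :=
  RingQuot.liftAlgHom K ⟨D.pathLift, D.pathLift_eq_of_extRel⟩

theorem lift_xe (i : ZMod m) : D.lift (xe K m q i) = D.idem i := by
  simp [lift, xe, pathLift_pe]

@[simp]
theorem lift_diag (d : ZMod m → K) : D.lift (diag q d) = D.φ d := by
  rw [diag, diagonalAlgHom_apply, map_sum]
  simp only [map_smul, lift_xe, ← idem_mul_φ]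
  rw [← Finset.sum_mul, D.completeOrthogonalIdempotents_idem.complete, one_mul]

@[simp]
theorem lift_X : D.lift (X q) = D.x := by
  simp only [X, map_sum, lift, xa, RingQuot.liftAlgHom_mkAlgHom_apply, pathLift_pa]
  rw [← Finset.sum_mul, D.completeOrthogonalIdempotents_idem.complete, one_mul]

@[simp]
theorem lift_Y : D.lift (Y q) = D.y := by
  simp only [Y, map_sum, lift, xb, RingQuot.liftAlgHom_mkAlgHom_apply, pathLift_pb]
  rw [← Finset.mul_sum, D.completeOrthogonalIdempotents_idem.complete, mul_one]

end LiftData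

end Lift

section Coefficients

variable (K m) in
/-- Families `(d_{s,t})` of tuples in `K^m`, recording the coefficients in `∑ d_{s,t} x^s y^t`. -/
abbrev CoeffSpace : Type := (ℕ × ℕ) →₀ (ZMod m → K)

variable (K m) in
/-- Left multiplication by `x` on coefficients: `x (d x^s y^t) = d(· + 1) x^{s+1} y^t`. -/
def coeffX : Module.End K (CoeffSpace K m) :=
  Finsupp.lsum K fun p =>
    Finsupp.lsingle (p.1 + 1, p.2) ∘ₗ LinearMap.funLeft K K (· + 1)

/-- Left multiplication by `y` on coefficients: `y (d x^s y^t) = c x^s y^{t+1}` with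
`cᵢ = fᵢ f_{i+1} ⋯ f_{i+s-1} d_{i-1}`. -/
def coeffY : Module.End K (CoeffSpace K m) :=
  Finsupp.lsum K fun p =>
    Finsupp.lsingle (p.1, p.2 + 1) ∘ₗ LinearMap.mulLeft K (stepProd 1 (twist q) p.1) ∘ₗ
      LinearMap.funLeft K K (· - 1)

@[simp]
theorem coeffX_single (s t : ℕ) (d : ZMod m → K) :
    coeffX K m (Finsupp.single (s, t) d) = Finsupp.single (s + 1, t) fun i => d (i + 1) := by
  rw [coeffX, Finsupp.lsum_single]
  rfl

@[simp]
theorem coeffY_single (s t : ℕ) (d : ZMod m → K) :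
    coeffY q (Finsupp.single (s, t) d) =
      Finsupp.single (s, t + 1) fun i => stepProd 1 (twist q) s i * d (i - 1) := by
  rw [coeffY, Finsupp.lsum_single]
  rfl

/-- The action of `K^m`, `x` and `y` on coefficient families. -/
def coeffLiftData : LiftData q (Module.End K (CoeffSpace K m)) where
  φ := Algebra.lsmul K K (CoeffSpace K m)
  x := coeffX K m
  y := coeffY q
  x_mul_φ d := Finsupp.lhom_ext fun ⟨s, t⟩ c => by
    simp [Pi.mul_def]
  y_mul_φ d := Finsupp.lhom_ext fun ⟨s, t⟩ c => by
    simp [Pi.mul_def, mul_left_comm]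
  y_mul_x := Finsupp.lhom_ext fun ⟨s, t⟩ c => by
    simp [Pi.mul_def, stepProd_succ', mul_assoc]

variable [NeZero m]

/-- The left regular representation of `E(Λ_q)` in coordinates. -/
def coeffRep : ExtAlg K m q →ₐ[K] Module.End K (CoeffSpace K m) := (coeffLiftData q).lift

@[simp]
theorem coeffRep_diag (c : ZMod m → K) (w : CoeffSpace K m) : coeffRep q (diag q c) w = c • w := by
  simp [coeffRep, coeffLiftData]

@[simp]
theorem coeffRep_X : coeffRep q (X q) = coeffX K m := (coeffLiftData q).lift_X

@[simp]
theorem coeffRep_Y : coeffRep q (Y q) = coeffY q := (coeffLiftData q).lift_Y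

/-- The element `∑ d_{s,t} x^s y^t` with the given coefficients. -/
def ofCoeff : CoeffSpace K m →ₗ[K] ExtAlg K m q :=
  Finsupp.lsum K fun p => LinearMap.mulRight K (X q ^ p.1 * Y q ^ p.2) ∘ₗ (diag q).toLinearMap

@[simp]
theorem ofCoeff_single (s t : ℕ) (d : ZMod m → K) :
    ofCoeff q (Finsupp.single (s, t) d) = diag q d * (X q ^ s * Y q ^ t) := by
  rw [ofCoeff, Finsupp.lsum_single]
  rfl

theorem ofCoeff_smul (c : ZMod m → K) (w : CoeffSpace K m) :
    ofCoeff q (c • w) = diag q c * ofCoeff q w := by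
  induction w using Finsupp.induction_linear with
  | zero => simp
  | add u v hu hv => simp [mul_add, hu, hv]
  | single p d =>
    rw [Finsupp.smul_single, ofCoeff_single, ofCoeff_single, smul_eq_mul, map_mul, mul_assoc]

theorem ofCoeff_coeffX (w : CoeffSpace K m) : ofCoeff q (coeffX K m w) = X q * ofCoeff q w := by
  induction w using Finsupp.induction_linear with
  | zero => simp
  | add u v hu hv => simp [mul_add, hu, hv]
  | single p d =>
    rw [coeffX_single, ofCoeff_single, ofCoeff_single, ← mul_assoc (X q), X_mul_diag, pow_succ']
    simp only [mul_assoc]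

theorem ofCoeff_coeffY (w : CoeffSpace K m) : ofCoeff q (coeffY q w) = Y q * ofCoeff q w := by
  induction w using Finsupp.induction_linear with
  | zero => simp
  | add u v hu hv => simp [mul_add, hu, hv]
  | single p d =>
    have hcoeff : (fun i => stepProd 1 (twist q) p.1 i * d (i - 1)) =
        (fun i => d (i - 1)) * stepProd 1 (twist q) p.1 := mul_comm _ _
    rw [coeffY_single, ofCoeff_single, ofCoeff_single, ← mul_assoc (Y q), Y_mul_diag, mul_assoc,
      ← mul_assoc (Y q), Y_mul_X_pow, hcoeff, map_mul, pow_succ']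
    simp only [mul_assoc]

theorem ofCoeff_coeffRep (z : ExtAlg K m q) (w : CoeffSpace K m) :
    ofCoeff q (coeffRep q z w) = z * ofCoeff q w := by
  have hz : z ∈ Algebra.adjoin K (Set.range (diag q) ∪ {X q, Y q}) := adjoin_diag_X_Y q ▸ trivial
  induction hz using Algebra.adjoin_induction generalizing w with
  | mem z hz =>
    obtain ⟨c, rfl⟩ | rfl | rfl := hz
    · rw [coeffRep_diag, ofCoeff_smul]
    · rw [coeffRep_X, ofCoeff_coeffX]
    · rw [coeffRep_Y, ofCoeff_coeffY]
  | algebraMap r => simp [Algebra.algebraMap_eq_smul_one]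
  | add u v _ _ hu hv => simp [hu, hv, add_mul]
  | mul u v _ _ hu hv => simp [hu, hv, mul_assoc]

/-- The coefficient family `(d_{s,t})` of an element `∑ d_{s,t} x^s y^t`, found by letting it act
on the coefficients of `1`. -/
def coeff : ExtAlg K m q →ₗ[K] CoeffSpace K m :=
  LinearMap.applyₗ (Finsupp.single (0, 0) 1) ∘ₗ (coeffRep q).toLinearMap

theorem coeff_mul (u v : ExtAlg K m q) : coeff q (u * v) = coeffRep q u (coeff q v) := by
  simp [coeff]

theorem coeff_one : coeff q 1 = Finsupp.single (0, 0) 1 := by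
  simp [coeff]

theorem ofCoeff_coeff (z : ExtAlg K m q) : ofCoeff q (coeff q z) = z := by
  simp [coeff, ofCoeff_coeffRep]

theorem coeff_Y_pow (t : ℕ) : coeff q (Y q ^ t) = Finsupp.single (0, t) 1 := by
  induction t with
  | zero => simpa using coeff_one q
  | succ t ih =>
    rw [pow_succ', coeff_mul, ih, coeffRep_Y, coeffY_single, stepProd_zero]
    simp only [Pi.one_apply, one_mul]
    rfl

theorem coeff_X_pow_mul_Y_pow (s t : ℕ) :
    coeff q (X q ^ s * Y q ^ t) = Finsupp.single (s, t) 1 := by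
  induction s with
  | zero => simpa using coeff_Y_pow q t
  | succ s ih =>
    rw [pow_succ', mul_assoc, coeff_mul, ih, coeffRep_X, coeffX_single]
    rfl

theorem coeff_ofCoeff (w : CoeffSpace K m) : coeff q (ofCoeff q w) = w := by
  induction w using Finsupp.induction_linear with
  | zero => simp
  | add u v hu hv => simp [hu, hv]
  | single p d =>
    rw [ofCoeff_single, coeff_mul, coeff_X_pow_mul_Y_pow, coeffRep_diag, Finsupp.smul_single,
      smul_eq_mul, mul_one]

/-- The normal form theorem: every element of `E(Λ_q)` is uniquely `∑ d_{s,t} x^s y^t`. -/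
def coeffEquiv : ExtAlg K m q ≃ₗ[K] CoeffSpace K m :=
  LinearEquiv.ofLinearMap (coeff q) (ofCoeff q) (LinearMap.ext (coeff_ofCoeff q))
    (LinearMap.ext (ofCoeff_coeff q))

theorem not_module_finite : ¬ Module.Finite K (ExtAlg K m q) := by
  rw [Module.Finite.equiv_iff (coeffEquiv q), Module.finite_finsupp_iff]
  simp only [not_or, not_and_or]
  exact ⟨not_isEmpty_of_nonempty _, not_subsingleton _,
    .inr (not_finite_iff_infinite.2 inferInstance)⟩

theorem span_xe_mul_X_pow_mul_Y_pow :
    Submodule.span K (Set.range fun p : ZMod m × ℕ × ℕ =>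
      xe K m q p.1 * (X q ^ p.2.1 * Y q ^ p.2.2)) = ⊤ := by
  refine eq_top_iff.2 fun z _ => ?_
  rw [← ofCoeff_coeff q z]
  induction coeff q z using Finsupp.induction_linear with
  | zero => simp
  | add u v hu hv => simpa using add_mem hu hv
  | single p d =>
    rw [ofCoeff_single, diag, diagonalAlgHom_apply, Finset.sum_mul]
    refine sum_mem fun i _ => ?_
    rw [smul_mul_assoc]
    exact Submodule.smul_mem _ _ (Submodule.subset_span ⟨(i, p), rfl⟩)

theorem coeff_X_mul (z : ExtAlg K m q) (s t : ℕ) (i : ZMod m) :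
    coeff q (X q * z) (s + 1, t) i = coeff q z (s, t) (i + 1) := by
  have hX := apply_of_single_eq_single (T := coeffX K m)
    ((add_left_injective 1).prodMap Function.injective_id)
    (τ := fun _ d i => d (i + 1)) (fun p d => coeffX_single p.1 p.2 d) (coeff q z) (s, t)
  rw [coeff_mul, coeffRep_X]
  exact congrFun hX i

theorem coeff_Y_mul (z : ExtAlg K m q) (s t : ℕ) (i : ZMod m) :
    coeff q (Y q * z) (s, t + 1) i = stepProd 1 (twist q) s i * coeff q z (s, t) (i - 1) := by
  have hY := apply_of_single_eq_single (T := coeffY q)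
    (Function.injective_id.prodMap (add_left_injective 1))
    (τ := fun p d i => stepProd 1 (twist q) p.1 i * d (i - 1))
    (fun p d => coeffY_single q p.1 p.2 d) (coeff q z) (s, t)
  rw [coeff_mul, coeffRep_Y]
  exact congrFun hY i

theorem ofCoeff_single_mul_X (s t : ℕ) (d : ZMod m → K) :
    ofCoeff q (Finsupp.single (s, t) d) * X q =
      ofCoeff q (Finsupp.single (s + 1, t) fun i => stepProd (-1) (twist q) t (i + s) * d i) := by
  rw [ofCoeff_single, ofCoeff_single, mul_assoc, mul_assoc, Y_pow_mul_X, ← mul_assoc (X q ^ s),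
    X_pow_mul_diag, mul_assoc, ← mul_assoc (diag q d), ← map_mul, pow_succ, mul_assoc (X q ^ s)]
  simp only [Pi.mul_def, mul_comm (d _)]

theorem ofCoeff_single_mul_Y (s t : ℕ) (d : ZMod m → K) :
    ofCoeff q (Finsupp.single (s, t) d) * Y q = ofCoeff q (Finsupp.single (s, t + 1) d) := by
  rw [ofCoeff_single, ofCoeff_single, mul_assoc, mul_assoc, pow_succ]

theorem coeff_mul_X (z : ExtAlg K m q) (s t : ℕ) (i : ZMod m) :
    coeff q (z * X q) (s + 1, t) i = stepProd (-1) (twist q) t (i + s) * coeff q z (s, t) i := by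
  have hX := apply_of_single_eq_single
    (T := coeff q ∘ₗ LinearMap.mulRight K (X q) ∘ₗ ofCoeff q)
    ((add_left_injective 1).prodMap Function.injective_id)
    (τ := fun p d i => stepProd (-1) (twist q) p.2 (i + p.1) * d i)
    (fun p d => (congrArg (coeff q) (ofCoeff_single_mul_X q p.1 p.2 d)).trans (coeff_ofCoeff q _))
    (coeff q z) (s, t)
  simpa [ofCoeff_coeff] using congrFun hX i

theorem coeff_mul_Y (z : ExtAlg K m q) (s t : ℕ) :
    coeff q (z * Y q) (s, t + 1) = coeff q z (s, t) := by
  have hY := apply_of_single_eq_single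
    (T := coeff q ∘ₗ LinearMap.mulRight K (Y q) ∘ₗ ofCoeff q)
    (Function.injective_id.prodMap (add_left_injective 1)) (τ := fun _ d => d)
    (fun p d => (congrArg (coeff q) (ofCoeff_single_mul_Y q p.1 p.2 d)).trans (coeff_ofCoeff q _))
    (coeff q z) (s, t)
  simpa [ofCoeff_coeff] using hY

end Coefficients

section GradedCentre

variable [NeZero m]

theorem mem_center_of_commute {z : ExtAlg K m q} (hdiag : ∀ d, Commute z (diag q d))
    (hX : Commute z (X q)) (hY : Commute z (Y q)) : z ∈ Subalgebra.center K (ExtAlg K m q) := by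
  have hgen : Set.range (diag q) ∪ {X q, Y q} ⊆ Subalgebra.centralizer K {z} := by
    rintro _ (⟨d, rfl⟩ | rfl | rfl) <;> rw [SetLike.mem_coe, Subalgebra.mem_centralizer_iff]
    exacts [by simpa using (hdiag d).eq, by simpa using hX.eq, by simpa using hY.eq]
  have htop : Subalgebra.centralizer K {z} = ⊤ :=
    eq_top_iff.2 (adjoin_diag_X_Y q ▸ Algebra.adjoin_le hgen)
  refine Subalgebra.mem_center_iff.2 fun w => ?_
  have hw : w ∈ Subalgebra.centralizer K {z} := htop ▸ trivial
  exact (Subalgebra.mem_centralizer_iff K |>.1 hw z rfl).symm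

theorem X_pow_mem_center {k : ℕ} (hk : (∏ i, twist q i) ^ k = 1) :
    X q ^ (m * k) ∈ Subalgebra.center K (ExtAlg K m q) := by
  have hstep : stepProd 1 (twist q) (m * k) = 1 := by
    ext i
    rw [← Units.val_one, stepProd_card_mul, hk, Pi.one_apply]
  refine mem_center_of_commute q (fun d => ?_) ((Commute.refl _).pow_left _) ?_
  · simp [commute_iff_eq, X_pow_mul_diag]
  · simp [commute_iff_eq, Y_mul_X_pow, hstep]

theorem Y_pow_mem_center {k : ℕ} (hk : (∏ i, twist q i) ^ k = 1) :
    Y q ^ (m * k) ∈ Subalgebra.center K (ExtAlg K m q) := by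
  have hstep : stepProd (-1) (twist q) (m * k) = 1 := by
    ext i
    rw [← Units.coe_neg_one, stepProd_card_mul, hk, Pi.one_apply]
  refine mem_center_of_commute q (fun d => ?_) ?_ ((Commute.refl _).pow_left _)
  · simp [commute_iff_eq, Y_pow_mul_diag]
  · simp [commute_iff_eq, Y_pow_mul_X, hstep]

theorem gam_eq_xe_mul_X_pow (i : ZMod m) (s : ℕ) : gam K m q i s = xe K m q i * X q ^ s := by
  induction s generalizing i with
  | zero => simp [gam]
  | succ s ih => rw [gam, ih, ← mul_assoc, xa_mul_xe, pow_succ', ← mul_assoc, xe_mul_X]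

theorem del_eq_Y_pow_mul_xe (i : ZMod m) (t : ℕ) : del K m q i t = Y q ^ t * xe K m q i := by
  induction t with
  | zero => simp [del]
  | succ t ih =>
    rw [del, ih, ← xe_mul_Y_pow, ← mul_assoc, xb_mul_xe, pow_succ', mul_assoc, ← xe_mul_Y_pow,
      ← mul_assoc, Y_mul_xe]

theorem homog_X_pow (s : ℕ) : Homog K m q s (X q ^ s) := by
  have he := completeOrthogonalIdempotents_xe q
  have hterm (i : ZMod m) : gam K m q i s * del K m q (i + s) 0 = xe K m q i * X q ^ s := by
    rw [gam_eq_xe_mul_X_pow, xe_mul_X_pow, del, mul_assoc, he.idem]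
  rw [← one_mul (X q ^ s), ← he.complete, Finset.sum_mul]
  exact Submodule.sum_mem _ fun i _ => Submodule.subset_span ⟨i, i + s, s, 0, rfl, (hterm i).symm⟩

theorem homog_Y_pow (t : ℕ) : Homog K m q t (Y q ^ t) := by
  have he := completeOrthogonalIdempotents_xe q
  have hterm (i : ZMod m) : gam K m q (i + t) 0 * del K m q i t = Y q ^ t * xe K m q i := by
    rw [del_eq_Y_pow_mul_xe, ← xe_mul_Y_pow, gam, ← mul_assoc, he.idem]
  rw [← mul_one (Y q ^ t), ← he.complete, Finset.mul_sum]
  exact Submodule.sum_mem _ fun i _ =>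
    Submodule.subset_span ⟨i + t, i, 0, t, zero_add t, (hterm i).symm⟩

theorem mem_ZGr_of_mem_center {z : ExtAlg K m q} {n : ℕ} (hn : Even n) (hz : Homog K m q n z)
    (hc : z ∈ Subalgebra.center K (ExtAlg K m q)) : z ∈ ZGr K m q :=
  Algebra.subset_adjoin ⟨n, hz, fun n' g _ => by
    rw [(hn.mul_right n').neg_one_pow, one_smul, Subalgebra.mem_center_iff.1 hc g]⟩

theorem finite_over_ZGr (hζ : IsOfFinOrder (∏ i, q i)) :
    Module.Finite (ZGr K m q) (ExtAlg K m q) := by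
  have hξ : IsOfFinOrder (∏ i, twist q i) := (isOfFinOrder_prod_neg_inv_iff q).2 hζ
  obtain ⟨k, hk, hξk⟩ := hξ.exists_pow_eq_one
  have hξ_even : (∏ i, twist q i) ^ (k * 2) = 1 := by rw [pow_mul, hξk, one_pow]
  have heven : Even (m * (k * 2)) := (even_two.mul_left k).mul_left m
  have hpos : 0 < m * (k * 2) := Nat.mul_pos (NeZero.pos m) (by lia)
  have hX := X_pow_mem_center q hξ_even
  have hY := Y_pow_mem_center q hξ_even
  exact subalgebra_finite_of_central_pow hpos
    (mem_ZGr_of_mem_center q heven (homog_X_pow q _) hX)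
    (mem_ZGr_of_mem_center q heven (homog_Y_pow q _) hY) hX hY (span_xe_mul_X_pow_mul_Y_pow q)

variable {q} {z : ExtAlg K m q} {ε : K}

theorem coeff_eq_prod_twist_pow_mul_of_mul_X (hε : ε * ε = 1) (hX : z * X q = ε • (X q * z))
    (s t : ℕ) (i : ZMod m) :
    coeff q z (s, t) i = ε ^ m * (∏ j, twist q j) ^ t * coeff q z (s, t) i := by
  rw [← prod_const_mul_stepProd_translate ε (-1) (twist q) t s]
  refine eq_prod_mul_of_cyclic_recurrence (fun j => ?_) i
  have hcoeff : stepProd (-1) (twist q) t (j + s) * coeff q z (s, t) j =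
      ε * coeff q z (s, t) (j + 1) := by
    rw [← coeff_mul_X, hX, map_smul, ← coeff_X_mul]
    rfl
  rw [mul_assoc, hcoeff, ← mul_assoc, hε, one_mul]

theorem coeff_eq_prod_twist_pow_mul_of_mul_Y (hY : z * Y q = ε • (Y q * z)) (s t : ℕ) (i : ZMod m) :
    coeff q z (s, t) i = ε ^ m * (∏ j, twist q j) ^ s * coeff q z (s, t) i := by
  rw [← prod_const_mul_stepProd_translate ε 1 (twist q) s 1]
  refine eq_prod_mul_of_cyclic_recurrence (fun j => ?_) i
  calc coeff q z (s, t) (j + 1)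
      = ε * coeff q (Y q * z) (s, t + 1) (j + 1) := by
        rw [← coeff_mul_Y, hY, map_smul]
        rfl
    _ = ε * stepProd 1 (twist q) s (j + 1) * coeff q z (s, t) j := by
        rw [coeff_Y_mul, add_sub_cancel_right, mul_assoc]

theorem coeff_eq_zero_of_not_isOfFinOrder (hζ : ¬ IsOfFinOrder (∏ i, q i)) (hε : ε * ε = 1)
    (hX : z * X q = ε • (X q * z)) (hY : z * Y q = ε • (Y q * z)) {s t : ℕ}
    (hst : (s, t) ≠ (0, 0)) : coeff q z (s, t) = 0 := by
  have hξ : ¬ IsOfFinOrder (∏ i, twist q i) := mt (isOfFinOrder_prod_neg_inv_iff q).1 hζ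
  ext i
  by_contra hi
  obtain hs | ht : s ≠ 0 ∨ t ≠ 0 := by
    by_contra! h
    exact hst (Prod.ext h.1 h.2)
  · have hcoeff := coeff_eq_prod_twist_pow_mul_of_mul_Y hY s t i
    exact hξ (isOfFinOrder_of_eq_mul_pow_mul hs hε hi hcoeff)
  · have hcoeff := coeff_eq_prod_twist_pow_mul_of_mul_X hε hX s t i
    exact hξ (isOfFinOrder_of_eq_mul_pow_mul ht hε hi hcoeff)

theorem ZGr_le_range_diag (hζ : ¬ IsOfFinOrder (∏ i, q i)) : ZGr K m q ≤ (diag q).range := by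
  refine Algebra.adjoin_le ?_
  rintro z ⟨n, -, hz⟩
  have hε : (-1 : K) ^ (n * 1) * (-1) ^ (n * 1) = 1 := by rw [← mul_pow]; simp
  have hX := hz 1 (X q) (by simpa using homog_X_pow q 1)
  have hY := hz 1 (Y q) (by simpa using homog_Y_pow q 1)
  have hsingle : coeff q z = Finsupp.single (0, 0) (coeff q z (0, 0)) := by
    refine Finsupp.ext fun p => ?_
    obtain rfl | hp := eq_or_ne p (0, 0)
    · rw [Finsupp.single_eq_same]
    · rw [Finsupp.single_eq_of_ne hp, coeff_eq_zero_of_not_isOfFinOrder hζ hε hX hY hp]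
  refine ⟨coeff q z (0, 0), ?_⟩
  simpa [ofCoeff_coeff] using (congrArg (ofCoeff q) hsingle).symm

theorem isOfFinOrder_of_finite_over_ZGr (hfin : Module.Finite (ZGr K m q) (ExtAlg K m q)) :
    IsOfFinOrder (∏ i, q i) := by
  by_contra hζ
  have : IsNoetherian K (diag q).range :=
    isNoetherian_of_surjective (diag q).rangeRestrict.toLinearMap
      (LinearMap.range_eq_top.2 (diag q).rangeRestrict_surjective)
  exact not_module_finite q (finite_of_finite_over_le (ZGr_le_range_diag hζ))

end GradedCentre

end ExtAlg

/-- `E(Λ_q)` is finitely generated as a module over its subalgebra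
`Z_gr(E(Λ_q))` if and only if `ζ = q_0 q_1 ⋯ q_{m-1}` is a root of unity. -/
theorem ext_algebra_finite_over_graded_centre_iff
    (K : Type) [Field K] (m : ℕ) [NeZero m] (hm : 1 ≤ m)
    (q : ZMod m → K) (hq : ∀ i, q i ≠ 0) :
    (∃ (n : ℕ) (g : Fin n → ExtAlg K m q),
        ∀ x : ExtAlg K m q, ∃ c : Fin n → ExtAlg K m q,
          (∀ i, c i ∈ ZGr K m q) ∧ x = ∑ i, c i * g i) ↔
      ∃ n : ℕ, 1 ≤ n ∧ (∏ i : ZMod m, q i) ^ n = 1 := by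
  rw [← subalgebra_finite_iff_exists_fin]
  exact ⟨fun hfin => isOfFinOrder_iff_pow_eq_one.1 (ExtAlg.isOfFinOrder_of_finite_over_ZGr hfin),
    fun hζ => ExtAlg.finite_over_ZGr q (isOfFinOrder_iff_pow_eq_one.2 hζ)⟩
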